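/- Let m be a positive integer with at least two distinct prime factors. Then there is a trim bideterministic weighted automaton A over the ring ℤ/mℤ of integers modulo m and a two-letter alphabet such that no minimal weighted automaton over ℤ/mℤ whose behaviour equals ‖A‖ is bideterministic. -/

import Mathlib

/-- A weighted automaton over a semiring `S` and alphabet `α`:
a finite type of states `Q`, a transition weighting `σ`, an initial
weighting `ι` and a terminal weighting `τ`. -/
structure WeightedAutomaton (S : Type) [Semiring S] (α : Type) : Type 1 where
  Q : Type
  [fintypeQ : Fintype Q]
  σ : Q → α → Q → S
  ι : Q → S
  τ : Q → S

namespace WeightedAutomaton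

attribute [instance] fintypeQ

variable {S : Type} [Semiring S] {α : Type}

/-- The "future" of a state on a word: the sum, over all runs from this state
upon the word, of the product of the transition weights times the terminal
weight of the last state.  (Sequences of states using a zero-weight transition
contribute zero, so this is exactly the sum over runs.) -/
def future (A : WeightedAutomaton S α) : List α → A.Q → S
  | [], q => A.τ q
  | c :: w, q => ∑ p : A.Q, A.σ q c p * A.future w p

/-- The behaviour of a weighted automaton: the series sending each word `w`
to the sum of the monomial weights `ι(q₀)·σ(q₀,c₁,q₁)⋯σ(q_{n−1},cₙ,qₙ)·τ(qₙ)`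
of all runs of the automaton upon `w`. -/
def behaviour (A : WeightedAutomaton S α) (w : List α) : S :=
  ∑ q : A.Q, A.ι q * A.future w q

/-- A weighted automaton is bideterministic if at most one state has nonzero
initial weight, at most one state has nonzero terminal weight, and for every
letter each state has at most one outgoing and at most one incoming transition
with nonzero weight upon that letter. -/
def Bideterministic (A : WeightedAutomaton S α) : Prop :=
  (∀ p q, A.ι p ≠ 0 → A.ι q ≠ 0 → p = q) ∧
  (∀ p q, A.τ p ≠ 0 → A.τ q ≠ 0 → p = q) ∧
  (∀ p c q q', A.σ p c q ≠ 0 → A.σ p c q' ≠ 0 → q = q') ∧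
  (∀ p p' c q, A.σ p c q ≠ 0 → A.σ p' c q ≠ 0 → p = p')

/-- `A.IsPath q l` : starting in state `q`, the list `l` of (letter, next state)
pairs follows transitions all of which have nonzero weight, i.e. it is a run. -/
def IsPath (A : WeightedAutomaton S α) : A.Q → List (α × A.Q) → Prop
  | _, [] => True
  | q, (c, q') :: l => A.σ q c q' ≠ 0 ∧ A.IsPath q' l

/-- The last state of a path. -/
def pathEnd (A : WeightedAutomaton S α) : A.Q → List (α × A.Q) → A.Q
  | q, [] => q
  | _, (_, q') :: l => A.pathEnd q' l

/-- The product of the transition weights along a path. -/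
def pathWeight (A : WeightedAutomaton S α) : A.Q → List (α × A.Q) → S
  | _, [] => 1
  | q, (c, q') :: l => A.σ q c q' * A.pathWeight q' l

/-- A state is accessible if some run from a state with nonzero initial weight
ends in it. -/
def Accessible (A : WeightedAutomaton S α) (q : A.Q) : Prop :=
  ∃ p l, A.ι p ≠ 0 ∧ A.IsPath p l ∧ A.pathEnd p l = q

/-- A state is coaccessible if some run from it ends in a state with nonzero
terminal weight. -/
def Coaccessible (A : WeightedAutomaton S α) (q : A.Q) : Prop :=
  ∃ l, A.IsPath q l ∧ A.τ (A.pathEnd q l) ≠ 0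

/-- A weighted automaton is trim if all its states are accessible and
coaccessible. -/
def Trim (A : WeightedAutomaton S α) : Prop :=
  ∀ q, A.Accessible q ∧ A.Coaccessible q

/-- A weighted automaton is semantically trim if every state lies on some run
whose monomial weight is nonzero. -/
def SemanticallyTrim (A : WeightedAutomaton S α) : Prop :=
  ∀ q, ∃ p l, A.IsPath p l ∧ (q = p ∨ q ∈ l.map Prod.snd) ∧
    A.ι p * A.pathWeight p l * A.τ (A.pathEnd p l) ≠ 0

/-- The number of states of a weighted automaton. -/
def states (A : WeightedAutomaton S α) : ℕ := Fintype.card A.Q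

/-- A weighted automaton is minimal if every weighted automaton over the same
semiring and alphabet with the same behaviour has at least as many states. -/
def Minimal (A : WeightedAutomaton S α) : Prop :=
  ∀ B : WeightedAutomaton S α, B.behaviour = A.behaviour → A.states ≤ B.states

end WeightedAutomaton

/-!
Let `e * f = 0` with `e ^ 2 ≠ 0 ≠ f ^ 2`. The five-state automaton with a run upon `aba` of weight
`e ^ 2` and a run upon `bb` of weight `f ^ 2`, disjoint except for their endpoints, is trim and
bideterministic. Its behaviour is realised with four states: when the interior state of the second
run is merged with the first interior state of the first one, every new run mixes the two and has
weight `e * f` or `f * e`.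

A bideterministic automaton with support `{aba, bb}` needs five states. The run upon an accepted
word none of whose proper subwords is accepted visits no state twice, since by commutativity
removing a cycle only removes a factor from the weight. Hence the run upon `aba` has four states,
and determinism and codeterminism keep the interior state of the run upon `bb` away from all of
them.

In `ZMod m` with `m = p ^ k * t` and `p ∤ t`, one takes `e = p ^ k` and `f = t`.
-/

namespace WeightedAutomaton

section Paths

variable {S : Type} [Semiring S] {α : Type} {A : WeightedAutomaton S α}

lemma isPath_append {p : A.Q} {l₁ l₂ : List (α × A.Q)} :
    A.IsPath p (l₁ ++ l₂) ↔ A.IsPath p l₁ ∧ A.IsPath (A.pathEnd p l₁) l₂ := by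
  induction l₁ generalizing p with
  | nil => simp [IsPath, pathEnd]
  | cons x l ih => simp [IsPath, pathEnd, ih, and_assoc]

lemma pathEnd_append (p : A.Q) (l₁ l₂ : List (α × A.Q)) :
    A.pathEnd p (l₁ ++ l₂) = A.pathEnd (A.pathEnd p l₁) l₂ := by
  induction l₁ generalizing p with
  | nil => rfl
  | cons x _ ih => exact ih x.2

lemma pathWeight_append (p : A.Q) (l₁ l₂ : List (α × A.Q)) :
    A.pathWeight p (l₁ ++ l₂) = A.pathWeight p l₁ * A.pathWeight (A.pathEnd p l₁) l₂ := by
  induction l₁ generalizing p with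
  | nil => simp [pathWeight, pathEnd]
  | cons x l ih => simp [pathWeight, pathEnd, ih, mul_assoc]

lemma accessible_of_ι_ne_zero {q : A.Q} (hq : A.ι q ≠ 0) : A.Accessible q :=
  ⟨q, [], hq, trivial, rfl⟩

lemma coaccessible_of_τ_ne_zero {q : A.Q} (hq : A.τ q ≠ 0) : A.Coaccessible q :=
  ⟨[], trivial, hq⟩

lemma Accessible.of_σ_ne_zero {p q : A.Q} {c : α} (hp : A.Accessible p) (hpq : A.σ p c q ≠ 0) :
    A.Accessible q := by
  obtain ⟨i, l, hi, hl, rfl⟩ := hp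
  exact ⟨i, l ++ [(c, q)], hi, isPath_append.2 ⟨hl, hpq, trivial⟩, pathEnd_append ..⟩

lemma Coaccessible.of_σ_ne_zero {p q : A.Q} {c : α} (hq : A.Coaccessible q)
    (hpq : A.σ p c q ≠ 0) : A.Coaccessible p := by
  obtain ⟨l, hl, hτ⟩ := hq
  exact ⟨(c, q) :: l, ⟨hpq, hl⟩, hτ⟩

lemma exists_isPath_of_future_ne_zero {w : List α} {q : A.Q} (h : A.future w q ≠ 0) :
    ∃ l, l.map Prod.fst = w ∧ A.IsPath q l ∧ A.τ (A.pathEnd q l) ≠ 0 := by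
  induction w generalizing q with
  | nil => exact ⟨[], rfl, trivial, h⟩
  | cons c w ih =>
    obtain ⟨p, -, hp⟩ := Finset.exists_ne_zero_of_sum_ne_zero h
    obtain ⟨l, rfl, hl, hτ⟩ := ih (right_ne_zero_of_mul hp)
    exact ⟨(c, p) :: l, rfl, ⟨left_ne_zero_of_mul hp, hl⟩, hτ⟩

lemma exists_isPath_of_behaviour_ne_zero {w : List α} (h : A.behaviour w ≠ 0) :
    ∃ p l, A.ι p ≠ 0 ∧ l.map Prod.fst = w ∧ A.IsPath p l ∧ A.τ (A.pathEnd p l) ≠ 0 := by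
  obtain ⟨p, -, hp⟩ := Finset.exists_ne_zero_of_sum_ne_zero h
  obtain ⟨l, hl⟩ := exists_isPath_of_future_ne_zero (right_ne_zero_of_mul hp)
  exact ⟨p, l, left_ne_zero_of_mul hp, hl⟩

/-- Determinism: at most one state has nonzero initial weight, and every state has at most one
outgoing transition of nonzero weight upon each letter. This is the part of `Bideterministic`
that confines each word to a single run. -/
def Deterministic (A : WeightedAutomaton S α) : Prop :=
  (∀ p q, A.ι p ≠ 0 → A.ι q ≠ 0 → p = q) ∧
  (∀ p c q q', A.σ p c q ≠ 0 → A.σ p c q' ≠ 0 → q = q')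

lemma Bideterministic.deterministic (hA : A.Bideterministic) : A.Deterministic :=
  ⟨hA.1, hA.2.2.1⟩

lemma Deterministic.future_map_fst (hA : A.Deterministic) {p : A.Q} {l : List (α × A.Q)}
    (hl : A.IsPath p l) :
    A.future (l.map Prod.fst) p = A.pathWeight p l * A.τ (A.pathEnd p l) := by
  induction l generalizing p with
  | nil => simp [future, pathWeight, pathEnd]
  | cons x l ih =>
    obtain ⟨c, q⟩ := x
    have future_cons : A.future (c :: l.map Prod.fst) p =
        A.σ p c q * A.future (l.map Prod.fst) q := by
      refine Fintype.sum_eq_single q fun q' hq' ↦ ?_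
      rw [not_not.1 (mt (hA.2 p c q' q · hl.1) hq'), zero_mul]
    simp only [List.map_cons, future_cons, ih hl.2, pathWeight, pathEnd, mul_assoc]

lemma Deterministic.behaviour_map_fst (hA : A.Deterministic) {p : A.Q} {l : List (α × A.Q)}
    (hp : A.ι p ≠ 0) (hl : A.IsPath p l) :
    A.behaviour (l.map Prod.fst) = A.ι p * A.pathWeight p l * A.τ (A.pathEnd p l) := by
  rw [mul_assoc, ← hA.future_map_fst hl]
  refine Fintype.sum_eq_single p fun p' hp' ↦ ?_
  rw [not_not.1 (mt (hA.1 p' p · hp) hp'), zero_mul]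

end Paths

section CommSemiring

variable {S : Type} [CommSemiring S] {α : Type} {A : WeightedAutomaton S α}

lemma Deterministic.behaviour_remove_cycle_ne_zero (hA : A.Deterministic) {p : A.Q}
    {l₁ l₂ l₃ : List (α × A.Q)} (hp : A.ι p ≠ 0) (hl : A.IsPath p (l₁ ++ (l₂ ++ l₃)))
    (hcycle : A.pathEnd p (l₁ ++ l₂) = A.pathEnd p l₁)
    (h : A.behaviour ((l₁ ++ (l₂ ++ l₃)).map Prod.fst) ≠ 0) :
    A.behaviour ((l₁ ++ l₃).map Prod.fst) ≠ 0 := by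
  rw [pathEnd_append] at hcycle
  have hl' : A.IsPath p (l₁ ++ l₃) := by
    simp only [isPath_append, hcycle] at hl
    exact isPath_append.2 ⟨hl.1, hl.2.2⟩
  have factor : A.behaviour ((l₁ ++ (l₂ ++ l₃)).map Prod.fst) =
      A.pathWeight (A.pathEnd p l₁) l₂ * A.behaviour ((l₁ ++ l₃).map Prod.fst) := by
    rw [hA.behaviour_map_fst hp hl, hA.behaviour_map_fst hp hl']
    simp only [pathWeight_append, pathEnd_append, hcycle]
    ring
  exact right_ne_zero_of_mul (factor ▸ h)

lemma Deterministic.nodup_states_of_minimal_word (hA : A.Deterministic) {p : A.Q}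
    {l : List (α × A.Q)} (hp : A.ι p ≠ 0) (hl : A.IsPath p l)
    (h : A.behaviour (l.map Prod.fst) ≠ 0)
    (hmin : ∀ v, v.Sublist (l.map Prod.fst) → A.behaviour v ≠ 0 → v = l.map Prod.fst) :
    (p :: l.map Prod.snd).Nodup := by
  suffices suffix_nodup : ∀ l₂ l₁, l₁ ++ l₂ = l →
      (A.pathEnd p l₁ :: l₂.map Prod.snd).Nodup from suffix_nodup l [] rfl
  intro l₂
  induction l₂ with
  | nil => simp
  | cons x l₂ ih =>
    rintro l₁ rfl
    have tail_nodup : ((x :: l₂).map Prod.snd).Nodup := by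
      simpa [pathEnd_append, pathEnd] using ih (l₁ ++ [x]) (by simp)
    refine List.nodup_cons.2 ⟨fun hmem ↦ ?_, tail_nodup⟩
    obtain ⟨y, hy, hy_snd⟩ := List.mem_map.1 hmem
    obtain ⟨u, v, huv⟩ := List.append_of_mem hy
    have split : x :: l₂ = (u ++ [y]) ++ v := by simp [huv]
    rw [split] at hl h hmin
    have hcycle : A.pathEnd p (l₁ ++ (u ++ [y])) = A.pathEnd p l₁ := by
      simpa only [pathEnd_append, pathEnd] using hy_snd
    have shortened := hmin _ (((List.sublist_append_right _ v).append_left l₁).map Prod.fst)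
      (hA.behaviour_remove_cycle_ne_zero hp hl hcycle h)
    have length_eq := congrArg List.length shortened
    simp only [List.length_map, List.length_append, List.length_singleton] at length_eq
    lia

lemma Deterministic.exists_isPath_nodup_of_minimal_word (hA : A.Deterministic) {w : List α}
    (hw : A.behaviour w ≠ 0) (hmin : ∀ v, v.Sublist w → A.behaviour v ≠ 0 → v = w) :
    ∃ p l, A.ι p ≠ 0 ∧ l.map Prod.fst = w ∧ A.IsPath p l ∧ A.τ (A.pathEnd p l) ≠ 0 ∧
      (p :: l.map Prod.snd).Nodup := by
  obtain ⟨p, l, hp, rfl, hl, hτ⟩ := exists_isPath_of_behaviour_ne_zero hw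
  exact ⟨p, l, hp, rfl, hl, hτ, hA.nodup_states_of_minimal_word hp hl hw hmin⟩

lemma Deterministic.exists_nodup_run_aba (hA : A.Deterministic) {a b : α} (hab : a ≠ b)
    (hsupp : Function.support A.behaviour = {[a, b, a], [b, b]}) :
    ∃ s₀ s₁ s₂ s₃, A.ι s₀ ≠ 0 ∧ A.IsPath s₀ [(a, s₁), (b, s₂), (a, s₃)] ∧ A.τ s₃ ≠ 0 ∧
      [s₀, s₁, s₂, s₃].Nodup := by
  classical
  have minimal : ∀ v : List α, v.Sublist [a, b, a] → A.behaviour v ≠ 0 → v = [a, b, a] := by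
    intro v hv hne
    refine (hsupp.le hne).resolve_right ?_
    rintro rfl
    simpa [List.count_cons, hab] using hv.count_le b
  obtain ⟨s₀, l, hι, hword, hl, hτ, hnodup⟩ :=
    hA.exists_isPath_nodup_of_minimal_word (hsupp.ge (by simp)) minimal
  obtain ⟨s₁, s₂, s₃, rfl⟩ : ∃ s₁ s₂ s₃, l = [(a, s₁), (b, s₂), (a, s₃)] := by
    simpa [List.map_eq_cons_iff] using hword
  exact ⟨s₀, s₁, s₂, s₃, hι, hl, hτ, hnodup⟩

lemma Deterministic.exists_nodup_run_bb (hA : A.Deterministic) {a b : α}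
    (hsupp : Function.support A.behaviour = {[a, b, a], [b, b]}) :
    ∃ t₀ t₁ t₂, A.ι t₀ ≠ 0 ∧ A.IsPath t₀ [(b, t₁), (b, t₂)] ∧ A.τ t₂ ≠ 0 ∧
      [t₀, t₁, t₂].Nodup := by
  have minimal : ∀ v : List α, v.Sublist [b, b] → A.behaviour v ≠ 0 → v = [b, b] := by
    intro v hv hne
    refine (hsupp.le hne).resolve_left ?_
    rintro rfl
    simpa using hv.length_le
  obtain ⟨t₀, l, hι, hword, hl, hτ, hnodup⟩ :=
    hA.exists_isPath_nodup_of_minimal_word (hsupp.ge (by simp)) minimal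
  obtain ⟨t₁, t₂, rfl⟩ : ∃ t₁ t₂, l = [(b, t₁), (b, t₂)] := by
    simpa [List.map_eq_cons_iff] using hword
  exact ⟨t₀, t₁, t₂, hι, hl, hτ, hnodup⟩

lemma Bideterministic.five_le_states (hA : A.Bideterministic) {a b : α} (hab : a ≠ b)
    (hsupp : Function.support A.behaviour = {[a, b, a], [b, b]}) : 5 ≤ A.states := by
  obtain ⟨s₀, s₁, s₂, s₃, hs₀, ⟨-, hs₁₂, -⟩, hs₃, hs⟩ :=
    hA.deterministic.exists_nodup_run_aba hab hsupp
  obtain ⟨t₀, t₁, t₂, ht₀, ⟨ht₀₁, ht₁₂, -⟩, ht₂, ht⟩ :=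
    hA.deterministic.exists_nodup_run_bb hsupp
  obtain ⟨ι_unique, τ_unique, σ_unique, σ_counique⟩ := hA
  obtain rfl : t₀ = s₀ := ι_unique _ _ ht₀ hs₀
  obtain rfl : t₂ = s₃ := τ_unique _ _ ht₂ hs₃
  have t₁_ne_s₁ : t₁ ≠ s₁ := by
    rintro rfl
    obtain rfl : s₂ = t₂ := σ_unique _ _ _ _ hs₁₂ ht₁₂
    simp at hs
  have t₁_ne_s₂ : t₁ ≠ s₂ := by
    rintro rfl
    obtain rfl : t₀ = s₁ := σ_counique _ _ _ _ ht₀₁ hs₁₂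
    simp at hs
  have all_nodup : [t₁, t₀, s₁, s₂, t₂].Nodup := by
    refine List.nodup_cons.2 ⟨?_, hs⟩
    simp_all [eq_comm]
  exact all_nodup.length_le_card

end CommSemiring

section Diamond

variable {S : Type} [Semiring S] {α : Type} [DecidableEq α] {a b : α}

/-- The automaton with two internally disjoint runs from the initial state `0` to the terminal
state `3`: `0 → 1 → 2 → 3` upon `aba` with weights `e, e, 1`, and `0 → 4 → 3` upon `bb` with
weights `f, f`. -/
def diamond (a b : α) (e f : S) : WeightedAutomaton S α where
  Q := Fin 5
  σ
    | 0, c, 1 => if c = a then e else 0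
    | 1, c, 2 => if c = b then e else 0
    | 2, c, 3 => if c = a then 1 else 0
    | 0, c, 4 => if c = b then f else 0
    | 4, c, 3 => if c = b then f else 0
    | _, _, _ => 0
  ι q := if q = 0 then 1 else 0
  τ q := if q = 3 then 1 else 0

/-- The automaton `diamond` with state `4` merged into state `1`. The words `ab` and `bba` newly
lead from `0` to `3`, with weights `e * f` and `f * e`. -/
def mergedDiamond (a b : α) (e f : S) : WeightedAutomaton S α where
  Q := Fin 4
  σ
    | 0, c, 1 => (if c = a then e else 0) + if c = b then f else 0
    | 1, c, 2 => if c = b then e else 0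
    | 2, c, 3 => if c = a then 1 else 0
    | 1, c, 3 => if c = b then f else 0
    | _, _, _ => 0
  ι q := if q = 0 then 1 else 0
  τ q := if q = 3 then 1 else 0

lemma diamond_σ_ne_zero {e f : S} {p q : Fin 5} {c : α} (h : (diamond a b e f).σ p c q ≠ 0) :
    c = a ∧ (p = 0 ∧ q = 1 ∨ p = 2 ∧ q = 3) ∨
      c = b ∧ (p = 1 ∧ q = 2 ∨ p = 0 ∧ q = 4 ∨ p = 4 ∧ q = 3) := by
  fin_cases p <;> fin_cases q <;> simp_all [diamond]

lemma bideterministic_diamond (hab : a ≠ b) (e f : S) : (diamond a b e f).Bideterministic := by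
  refine ⟨fun (p q : Fin 5) hp hq ↦ ?_, fun (p q : Fin 5) hp hq ↦ ?_,
    fun (p : Fin 5) c (q q' : Fin 5) h h' ↦ ?_, fun (p p' : Fin 5) c (q : Fin 5) h h' ↦ ?_⟩
  · simp only [diamond] at hp hq
    grind
  · simp only [diamond] at hp hq
    grind
  · have edge := diamond_σ_ne_zero h
    have edge' := diamond_σ_ne_zero h'
    grind
  · have edge := diamond_σ_ne_zero h
    have edge' := diamond_σ_ne_zero h'
    grind

lemma trim_diamond {e f : S} (he : e ≠ 0) (hf : f ≠ 0) : (diamond a b e f).Trim := by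
  have : Nontrivial S := nontrivial_of_ne e 0 he
  have h₀₁ : (diamond a b e f).σ (0 : Fin 5) a (1 : Fin 5) ≠ 0 := by simpa [diamond]
  have h₁₂ : (diamond a b e f).σ (1 : Fin 5) b (2 : Fin 5) ≠ 0 := by simpa [diamond]
  have h₂₃ : (diamond a b e f).σ (2 : Fin 5) a (3 : Fin 5) ≠ 0 := by simp [diamond]
  have h₀₄ : (diamond a b e f).σ (0 : Fin 5) b (4 : Fin 5) ≠ 0 := by simpa [diamond]
  have h₄₃ : (diamond a b e f).σ (4 : Fin 5) b (3 : Fin 5) ≠ 0 := by simpa [diamond]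
  have acc₀ : (diamond a b e f).Accessible (0 : Fin 5) :=
    accessible_of_ι_ne_zero (by simp [diamond])
  have acc₁ := acc₀.of_σ_ne_zero h₀₁
  have acc₂ := acc₁.of_σ_ne_zero h₁₂
  have coacc₃ : (diamond a b e f).Coaccessible (3 : Fin 5) :=
    coaccessible_of_τ_ne_zero (by simp [diamond])
  have coacc₂ := coacc₃.of_σ_ne_zero h₂₃
  have coacc₁ := coacc₂.of_σ_ne_zero h₁₂
  intro (q : Fin 5)
  fin_cases q
  · exact ⟨acc₀, coacc₁.of_σ_ne_zero h₀₁⟩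
  · exact ⟨acc₁, coacc₁⟩
  · exact ⟨acc₂, coacc₂⟩
  · exact ⟨acc₂.of_σ_ne_zero h₂₃, coacc₃⟩
  · exact ⟨acc₀.of_σ_ne_zero h₀₄, coacc₃.of_σ_ne_zero h₄₃⟩

lemma future_diamond_cons (e f : S) (c : α) (w : List α) :
    (diamond a b e f).future (c :: w) =
      (![(if c = a then e else 0) * (diamond a b e f).future w (1 : Fin 5) +
          (if c = b then f else 0) * (diamond a b e f).future w (4 : Fin 5),
        (if c = b then e else 0) * (diamond a b e f).future w (2 : Fin 5),
        (if c = a then 1 else 0) * (diamond a b e f).future w (3 : Fin 5),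
        0,
        (if c = b then f else 0) * (diamond a b e f).future w (3 : Fin 5)] : Fin 5 → S) := by
  funext (q : Fin 5)
  refine (Fin.sum_univ_five _).trans ?_
  fin_cases q <;> simp [diamond]

lemma future_diamond (e f : S) (w : List α) :
    (diamond a b e f).future w =
      (![(if w = [a, b, a] then e ^ 2 else 0) + if w = [b, b] then f ^ 2 else 0,
        if w = [b, a] then e else 0,
        if w = [a] then 1 else 0,
        if w = [] then 1 else 0,
        if w = [b] then f else 0] : Fin 5 → S) := by
  induction w with
  | nil =>
    funext (q : Fin 5)
    fin_cases q <;> simp [future, diamond]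
  | cons c w ih =>
    rw [future_diamond_cons, ih]
    funext (q : Fin 5)
    fin_cases q <;> simp [sq, ← ite_and, and_comm]

lemma behaviour_diamond (e f : S) (w : List α) :
    (diamond a b e f).behaviour w =
      (if w = [a, b, a] then e ^ 2 else 0) + if w = [b, b] then f ^ 2 else 0 := by
  rw [behaviour, future_diamond]
  exact (Fin.sum_univ_five _).trans (by simp [diamond])

lemma support_behaviour_diamond {e f : S} (he : e ^ 2 ≠ 0) (hf : f ^ 2 ≠ 0) :
    Function.support (diamond a b e f).behaviour = {[a, b, a], [b, b]} := by
  ext w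
  simp only [Function.mem_support, behaviour_diamond, Set.mem_insert_iff, Set.mem_singleton_iff]
  split_ifs <;> simp_all

lemma future_mergedDiamond_cons (e f : S) (c : α) (w : List α) :
    (mergedDiamond a b e f).future (c :: w) =
      (![((if c = a then e else 0) + if c = b then f else 0) *
          (mergedDiamond a b e f).future w (1 : Fin 4),
        (if c = b then e else 0) * (mergedDiamond a b e f).future w (2 : Fin 4) +
          (if c = b then f else 0) * (mergedDiamond a b e f).future w (3 : Fin 4),
        (if c = a then 1 else 0) * (mergedDiamond a b e f).future w (3 : Fin 4),
        0] : Fin 4 → S) := by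
  funext (q : Fin 4)
  refine (Fin.sum_univ_four _).trans ?_
  fin_cases q <;> simp [mergedDiamond]

lemma future_mergedDiamond {e f : S} (hef : e * f = 0) (hfe : f * e = 0) (w : List α) :
    (mergedDiamond a b e f).future w =
      (![(if w = [a, b, a] then e ^ 2 else 0) + if w = [b, b] then f ^ 2 else 0,
        (if w = [b, a] then e else 0) + if w = [b] then f else 0,
        if w = [a] then 1 else 0,
        if w = [] then 1 else 0] : Fin 4 → S) := by
  induction w with
  | nil =>
    funext (q : Fin 4)
    fin_cases q <;> simp [future, mergedDiamond]
  | cons c w ih =>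
    rw [future_mergedDiamond_cons, ih]
    funext (q : Fin 4)
    fin_cases q <;> simp [sq, add_mul, mul_add, hef, hfe, ← ite_and, and_comm]

lemma behaviour_mergedDiamond {e f : S} (hef : e * f = 0) (hfe : f * e = 0) :
    (mergedDiamond a b e f).behaviour = (diamond a b e f).behaviour := by
  funext w
  rw [behaviour_diamond, behaviour, future_mergedDiamond hef hfe]
  exact (Fin.sum_univ_four _).trans (by simp [mergedDiamond])

end Diamond

end WeightedAutomaton

lemma exists_zmod_mul_eq_zero_not_isNilpotent {m p q : ℕ} (hm : m ≠ 0) (hp : p.Prime)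
    (hq : q.Prime) (hpq : p ≠ q) (hpm : p ∣ m) (hqm : q ∣ m) :
    ∃ e f : ZMod m, e * f = 0 ∧ ¬ IsNilpotent e ∧ ¬ IsNilpotent f := by
  obtain ⟨k, t, hpt, rfl⟩ := Nat.exists_eq_pow_mul_and_not_dvd hm p hp.ne_one
  refine ⟨(p ^ k : ℕ), (t : ℕ), ?_, ?_, ?_⟩
  · rw [← Nat.cast_mul, ZMod.natCast_self]
  · rintro ⟨n, hn⟩
    rw [← Nat.cast_pow, ZMod.natCast_eq_zero_iff] at hn
    have q_dvd_p : q ∣ p := hq.dvd_of_dvd_pow (hq.dvd_of_dvd_pow (hqm.trans hn))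
    exact hpq ((Nat.prime_dvd_prime_iff_eq hq hp).1 q_dvd_p).symm
  · rintro ⟨n, hn⟩
    rw [← Nat.cast_pow, ZMod.natCast_eq_zero_iff] at hn
    exact hpt (hp.dvd_of_dvd_pow (hpm.trans hn))

open WeightedAutomaton in
theorem exists_trim_bideterministic_no_minimal_bideterministic_zmod_general
    {S : Type} [CommSemiring S] {α : Type} [Nontrivial α] {e f : S}
    (hef : e * f = 0) (he : e ^ 2 ≠ 0) (hf : f ^ 2 ≠ 0) :
    ∃ A : WeightedAutomaton S α, A.Trim ∧ A.Bideterministic ∧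
      ∀ B : WeightedAutomaton S α,
        B.behaviour = A.behaviour → B.Minimal → ¬ B.Bideterministic := by
  classical
  obtain ⟨a, b, hab⟩ := exists_pair_ne α
  refine ⟨diamond a b e f, trim_diamond (ne_zero_pow two_ne_zero he) (ne_zero_pow two_ne_zero hf),
    bideterministic_diamond hab e f, fun B hB hmin hbidet ↦ ?_⟩
  have merged_behaviour : (mergedDiamond a b e f).behaviour = B.behaviour :=
    (behaviour_mergedDiamond hef (mul_comm f e ▸ hef)).trans hB.symm
  have le_four : B.states ≤ 4 := (hmin _ merged_behaviour).trans_eq (Fintype.card_fin 4)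
  have five_le : 5 ≤ B.states :=
    hbidet.five_le_states hab (hB ▸ support_behaviour_diamond he hf)
  lia

/-- If `m` is a positive integer with at least two distinct prime factors,
then there is a trim bideterministic weighted automaton over `ZMod m` and a
two-letter alphabet none of whose equivalent minimal automata is
bideterministic. -/
theorem exists_trim_bideterministic_no_minimal_bideterministic_zmod
    (m : ℕ) (hm : 0 < m)
    (hpq : ∃ p q : ℕ, p.Prime ∧ q.Prime ∧ p ≠ q ∧ p ∣ m ∧ q ∣ m) :
    ∃ A : WeightedAutomaton (ZMod m) Bool, A.Trim ∧ A.Bideterministic ∧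
      ∀ B : WeightedAutomaton (ZMod m) Bool,
        B.behaviour = A.behaviour → B.Minimal → ¬ B.Bideterministic := by
  obtain ⟨p, q, hp, hq, hne, hpm, hqm⟩ := hpq
  obtain ⟨e, f, hef, he, hf⟩ :=
    exists_zmod_mul_eq_zero_not_isNilpotent hm.ne' hp hq hne hpm hqm
  exact exists_trim_bideterministic_no_minimal_bideterministic_zmod_general hef
    (fun h ↦ he ⟨2, h⟩) (fun h ↦ hf ⟨2, h⟩)
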